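/- Let U ⊂ ℝ^d be open, let Φ : U → ℝ be smooth with Δ²Φ = 0 on U, let u : U → ℝ be smooth, let n ∈ ℝ^d be a fixed vector, and let j, k ∈ {1, …, d}. Then at every point of U: Σ_{ℓ=1}^d n_ℓ D_ℓ(ΔD_jD_kΦ)·u − ΔD_jD_kΦ·Σ_{ℓ=1}^d n_ℓ D_ℓ u = Σ_{ℓ=1}^d [ (n_ℓ D_j − n_j D_ℓ)(D_ℓ ΔD_k Φ · u) − (n_ℓ D_k − n_k D_ℓ)(D_ℓ ΔΦ · D_j u) + D_ℓ ΔΦ · (n_ℓ D_k − n_k D_ℓ)(D_j u) + (n_j D_ℓ − n_ℓ D_j)(ΔD_k Φ · D_ℓ u) − ΔD_k Φ · (n_j D_ℓ − n_ℓ D_j)(D_ℓ u) ]. -/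

import Mathlib

open MeasureTheory Metric Filter Set
open scoped ENNReal NNReal Topology RealInnerProductSpace

noncomputable section

/-- Euclidean space `ℝ^d`. -/
abbrev Euc (d : ℕ) := EuclideanSpace ℝ (Fin d)

variable {d : ℕ}

/-- The partial derivative `D_i u` in the `i`-th coordinate direction. -/
def pder (i : Fin d) (u : Euc d → ℝ) : Euc d → ℝ :=
  fun x => fderiv ℝ u x (EuclideanSpace.single i 1)

/-- The Laplacian `Δu = ∑ i, D_i D_i u`. -/
def lap (u : Euc d → ℝ) : Euc d → ℝ := fun x => ∑ i, pder i (pder i u) x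

/-- The bilaplacian `Δ²u`. -/
def bilap (u : Euc d → ℝ) : Euc d → ℝ := lap (lap u)

/-- `u` is biharmonic in the open set `Ω` : it is smooth there and `Δ²u = 0`. -/
def Biharmonic (Ω : Set (Euc d)) (u : Euc d → ℝ) : Prop :=
  ContDiffOn ℝ (⊤ : ℕ∞) u Ω ∧ ∀ x ∈ Ω, bilap u x = 0

/-- `|∇u|`. -/
def gnorm1 (u : Euc d → ℝ) : Euc d → ℝ :=
  fun x => Real.sqrt (∑ i, (pder i u x) ^ 2)

/-- `|∇²u|`. -/
def gnorm2 (u : Euc d → ℝ) : Euc d → ℝ :=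
  fun x => Real.sqrt (∑ i, ∑ j, (pder i (pder j u) x) ^ 2)

/-- `|∇³u|`. -/
def gnorm3 (u : Euc d → ℝ) : Euc d → ℝ :=
  fun x => Real.sqrt (∑ i, ∑ j, ∑ k, (pder i (pder j (pder k u)) x) ^ 2)

/-- The last ("vertical") coordinate `x_d` of a point of `ℝ^d`. -/
def vertCoord (d : ℕ) (x : Euc d) : ℝ :=
  if h : 0 < d then x ⟨d - 1, Nat.sub_lt h one_pos⟩ else 0

/-- The vertical unit vector `e_d`. -/
def vertDir (d : ℕ) : Euc d :=
  if h : 0 < d then EuclideanSpace.single ⟨d - 1, Nat.sub_lt h one_pos⟩ 1 else 0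

/-- The horizontal coordinates `x′` of a point of `ℝ^d`. -/
def graphCoord (d : ℕ) (x : Euc d) : Euc (d - 1) :=
  WithLp.toLp 2 fun i => x (Fin.castLE (Nat.sub_le d 1) i)

/-- The partial derivative `D_d u` in the vertical direction. -/
def pdLast (u : Euc d → ℝ) : Euc d → ℝ := fun x => fderiv ℝ u x (vertDir d)

/-- A bounded Lipschitz domain: a bounded connected open set whose boundary is covered by
finitely many open sets, in each of which, after a rigid motion, the boundary is the graph of
a Lipschitz function and the domain lies above the graph. -/
def IsLipschitzDomain (Ω : Set (Euc d)) : Prop :=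
  IsOpen Ω ∧ Bornology.IsBounded Ω ∧ IsConnected Ω ∧
  ∃ (N : ℕ) (U : Fin N → Set (Euc d)),
    (∀ i, IsOpen (U i)) ∧ (frontier Ω ⊆ ⋃ i, U i) ∧
    ∀ i, ∃ (R : Euc d ≃ᵢ Euc d) (M : ℝ≥0) (η : Euc (d - 1) → ℝ),
      LipschitzWith M η ∧
      U i ∩ Ω = U i ∩ (R ⁻¹' {x | η (graphCoord d x) < vertCoord d x}) ∧
      U i ∩ frontier Ω = U i ∩ (R ⁻¹' {x | vertCoord d x = η (graphCoord d x)})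

/-- The nontangential approach cone (aperture 1) with vertex `Q ∈ ∂Ω`. -/
def ntCone (Ω : Set (Euc d)) (Q : Euc d) : Set (Euc d) :=
  {x | x ∈ Ω ∧ dist x Q < 2 * Metric.infDist x (frontier Ω)}

/-- The nontangential maximal function `(w)*`. -/
def ntMax (Ω : Set (Euc d)) (w : Euc d → ℝ) (Q : Euc d) : ℝ≥0∞ :=
  ⨆ x ∈ ntCone Ω Q, (‖w x‖₊ : ℝ≥0∞)

/-- `w` has nontangential limit `L` at the boundary point `Q`. -/
def NTLim (Ω : Set (Euc d)) (w : Euc d → ℝ) (Q : Euc d) (L : ℝ) : Prop :=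
  Filter.Tendsto w (nhdsWithin Q (ntCone Ω Q)) (nhds L)

/-- The surface measure on `∂Ω`: the `(d-1)`-dimensional Hausdorff measure restricted
to the boundary. -/
def sMeasure (Ω : Set (Euc d)) : Measure (Euc d) :=
  (μH[(d : ℝ) - 1]).restrict (frontier Ω)

/-- The `L^p(∂Ω)` norm of the nontangential maximal function of `w`. -/
def ntMaxLp (Ω : Set (Euc d)) (w : Euc d → ℝ) (p : ℝ) : ℝ≥0∞ :=
  (∫⁻ Q, (ntMax Ω w Q) ^ p ∂(sMeasure Ω)) ^ (1 / p)

/-- The `L^p(∂Ω, σ)` norm of a function. -/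
def bLp (Ω : Set (Euc d)) (f : Euc d → ℝ) (p : ℝ) : ℝ≥0∞ :=
  eLpNorm f (ENNReal.ofReal p) (sMeasure Ω)

/-- A test function: smooth with compact support in `ℝ^d`. -/
def TestFun (f : Euc d → ℝ) : Prop := ContDiff ℝ (⊤ : ℕ∞) f ∧ HasCompactSupport f

/-- `u` has boundary data `(D^α f)_{|α| ≤ 1}` in the sense of nontangential convergence
`σ`-a.e. on `∂Ω`. -/
def HasBVals1 (Ω : Set (Euc d)) (u f : Euc d → ℝ) : Prop :=
  ∀ᵐ Q ∂(sMeasure Ω), NTLim Ω u Q (f Q) ∧ ∀ i, NTLim Ω (pder i u) Q (pder i f Q)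

/-- `n` is the (σ-a.e. defined) outward unit normal of `Ω`, characterized by the
Gauss–Green formula. -/
def IsOutwardNormal (Ω : Set (Euc d)) (n : Euc d → Euc d) : Prop :=
  (∀ᵐ Q ∂(sMeasure Ω), ‖n Q‖ = 1) ∧
  ∀ φ : Euc d → Euc d, ContDiff ℝ (⊤ : ℕ∞) φ → HasCompactSupport φ →
    ∫ x in Ω, (∑ i, pder i (fun y => φ y i) x) = ∫ Q, (inner ℝ (φ Q) (n Q) : ℝ) ∂(sMeasure Ω)

/-- `|∇_t h|`, the norm of the tangential gradient `∇h − (∇h·n)n` of `h` on `∂Ω`. -/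
def tgradNorm (n : Euc d → Euc d) (h : Euc d → ℝ) (Q : Euc d) : ℝ :=
  Real.sqrt (∑ i, (pder i h Q - (∑ j, n Q j * pder j h Q) * n Q i) ^ 2)

/-- `|∇_t ∇f|`, the norm of the tangential gradient of the full gradient of `f`. -/
def tgrad2Norm (n : Euc d → Euc d) (f : Euc d → ℝ) (Q : Euc d) : ℝ :=
  Real.sqrt (∑ k, (tgradNorm n (pder k f) Q) ^ 2)

/-- Unique solvability of the `L^q` Dirichlet problem `(D)_q` for `Δ²u = 0` in `Ω`:
existence, with uniform estimate, of solutions with Whitney-array boundary data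
`(D^α f)_{|α|≤1}`, together with uniqueness. -/
def DirichletSolvable (Ω : Set (Euc d)) (q : ℝ) : Prop :=
  (∃ C : ℝ≥0, ∀ f : Euc d → ℝ, TestFun f →
    ∃ u : Euc d → ℝ, Biharmonic Ω u ∧ ntMaxLp Ω (gnorm1 u) q < ⊤ ∧ HasBVals1 Ω u f ∧
      ntMaxLp Ω (gnorm1 u) q + ntMaxLp Ω u q ≤
        C * (bLp Ω f q + ∑ i : Fin d, bLp Ω (pder i f) q)) ∧
  (∀ u : Euc d → ℝ, Biharmonic Ω u → ntMaxLp Ω (gnorm1 u) q < ⊤ →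
    HasBVals1 Ω u (fun _ => 0) → ∀ x ∈ Ω, u x = 0)

/-- Unique solvability of the `L^p` regularity problem `(R)_p` for `Δ²u = 0` in `Ω`:
existence, with uniform estimate, of solutions with Whitney-array boundary data
`(D^α g)_{|α|≤2}`, together with uniqueness. -/
def RegularitySolvable (Ω : Set (Euc d)) (p : ℝ) : Prop :=
  (∃ (n : Euc d → Euc d) (C : ℝ≥0), IsOutwardNormal Ω n ∧
    ∀ g : Euc d → ℝ, TestFun g →
    ∃ u : Euc d → ℝ, Biharmonic Ω u ∧ ntMaxLp Ω (gnorm2 u) p < ⊤ ∧ HasBVals1 Ω u g ∧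
      ntMaxLp Ω (gnorm2 u) p ≤
        C * ((∑ i : Fin d, bLp Ω (tgradNorm n (pder i g)) p) + bLp Ω g p +
          ∑ i : Fin d, bLp Ω (pder i g) p)) ∧
  (∀ u : Euc d → ℝ, Biharmonic Ω u → ntMaxLp Ω (gnorm2 u) p < ⊤ →
    HasBVals1 Ω u (fun _ => 0) → ∀ x ∈ Ω, u x = 0)

/-- `u` is the solution of the `L²` regularity problem in `Ω` with boundary data
`(D^α f)_{|α|≤1}`. -/
def IsL2Sol (Ω : Set (Euc d)) (f u : Euc d → ℝ) : Prop :=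
  Biharmonic Ω u ∧ ntMaxLp Ω (gnorm2 u) 2 < ⊤ ∧ HasBVals1 Ω u f

open Classical in
/-- The solution of the `L²` regularity problem with data `f` (junk value if none exists). -/
def L2Sol (Ω : Set (Euc d)) (f : Euc d → ℝ) : Euc d → ℝ :=
  if h : ∃ u, IsL2Sol Ω f u then h.choose else 0

/-- The bilinear form `Λ[f,g] = −∫_Ω Δu·Δv`, where `u, v` solve the `L²` regularity
problem with data `f, g`. -/
def biForm (Ω : Set (Euc d)) (f g : Euc d → ℝ) : ℝ :=
  - ∫ x in Ω, lap (L2Sol Ω f) x * lap (L2Sol Ω g) x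

/-- The bilinear estimate `|Λ[f,g]| ≤ C (‖∇_t∇f‖_p + ‖∇f‖_p + ‖f‖_p)(‖∇g‖_q + ‖g‖_q)`
for all test functions `f, g`. -/
def BilinearEstimate (Ω : Set (Euc d)) (p q : ℝ) : Prop :=
  ∃ (n : Euc d → Euc d) (C : ℝ≥0), IsOutwardNormal Ω n ∧
    ∀ f g : Euc d → ℝ, TestFun f → TestFun g →
      (‖biForm Ω f g‖₊ : ℝ≥0∞) ≤
        C * (bLp Ω (tgrad2Norm n f) p + bLp Ω (gnorm1 f) p + bLp Ω f p) *
          (bLp Ω (gnorm1 g) q + bLp Ω g q)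

/-!
Write `T_{ij} = n_i D_j - n_j D_i` and `∂_n = ∑ n_l D_l`. By the Leibniz rule, everything rests on
`∑ T_{lj} D_l f = ∂_n D_j f - n_j Δf`, whose last term vanishes for harmonic `f`. Applied to the
harmonic functions `ΔD_kΦ` and `ΔΦ`, it produces `∂_n (ΔD_jD_kΦ) u` and `∂_n (ΔD_kΦ) D_j u`; the
latter cancels against the first-order terms, because `D_l A T_{lj} u + T_{jl} A D_l u` equals
`n_l (D_l A D_j u - D_j A D_l u)` for `A = ΔD_kΦ`.
-/

section PartialDerivatives

variable {f g : Euc d → ℝ} {x : Euc d}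

theorem pder_congr (h : f =ᶠ[𝓝 x] g) (i : Fin d) : pder i f =ᶠ[𝓝 x] pder i g :=
  (h.fderiv (𝕜 := ℝ)).mono fun y hy => by simp only [pder, hy]

theorem lap_congr (h : f =ᶠ[𝓝 x] g) : lap f =ᶠ[𝓝 x] lap g := by
  have hsecond : ∀ᶠ y in 𝓝 x, ∀ i, pder i (pder i f) y = pder i (pder i g) y :=
    eventually_all.2 fun i => pder_congr (pder_congr h i) i
  exact hsecond.mono fun y hy => Finset.sum_congr rfl fun i _ => hy i

theorem contDiffAt_pder {m n : WithTop ℕ∞} (hf : ContDiffAt ℝ n f x) (hmn : m + 1 ≤ n)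
    (i : Fin d) : ContDiffAt ℝ m (pder i f) x :=
  (hf.fderiv_right hmn).clm_apply contDiffAt_const

theorem contDiffAt_lap {m n : WithTop ℕ∞} (hf : ContDiffAt ℝ n f x) (hmn : m + 1 + 1 ≤ n) :
    ContDiffAt ℝ m (lap f) x :=
  ContDiffAt.sum fun i _ => contDiffAt_pder (contDiffAt_pder hf hmn i) le_rfl i

theorem pder_mul (hf : DifferentiableAt ℝ f x) (hg : DifferentiableAt ℝ g x) (i : Fin d) :
    pder i (fun y => f y * g y) x = pder i f x * g x + f x * pder i g x := by
  simp only [pder, fderiv_fun_mul hf hg, add_apply, smul_apply, smul_eq_mul]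
  ring

theorem pder_sum {ι : Type*} {s : Finset ι} {F : ι → Euc d → ℝ}
    (hF : ∀ a ∈ s, DifferentiableAt ℝ (F a) x) (i : Fin d) :
    pder i (fun y => ∑ a ∈ s, F a y) x = ∑ a ∈ s, pder i (F a) x := by
  simp only [pder, fderiv_fun_sum hF, sum_apply]

theorem pder_pder_comm (hf : ContDiffAt ℝ 2 f x) (i j : Fin d) :
    pder i (pder j f) x = pder j (pder i f) x := by
  have hfderiv : DifferentiableAt ℝ (fderiv ℝ f) x :=
    (hf.fderiv_right (m := 1) (by norm_num)).differentiableAt one_ne_zero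
  have hsecond (a b : Fin d) : pder a (pder b f) x =
      fderiv ℝ (fderiv ℝ f) x (EuclideanSpace.single a 1) (EuclideanSpace.single b 1) := by
    unfold pder
    simp [fderiv_clm_apply hfderiv (differentiableAt_const _)]
  rw [hsecond, hsecond, (hf.isSymmSndFDerivAt (by simp)).eq]

theorem lap_pder (hf : ContDiffAt ℝ 3 f x) (i : Fin d) :
    lap (pder i f) x = pder i (lap f) x := by
  have hf' (l : Fin d) : ContDiffAt ℝ 2 (pder l f) x := contDiffAt_pder hf (by norm_num) l
  have hf'' (l : Fin d) : DifferentiableAt ℝ (pder l (pder l f)) x :=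
    (contDiffAt_pder (m := 1) (hf' l) (by norm_num) l).differentiableAt one_ne_zero
  have hcomm (l : Fin d) : pder l (pder i f) =ᶠ[𝓝 x] pder i (pder l f) :=
    ((hf.of_le (by norm_num)).eventually (by simp)).mono fun y hy => pder_pder_comm hy l i
  calc
    lap (pder i f) x = ∑ l, pder l (pder i (pder l f)) x :=
      Finset.sum_congr rfl fun l _ => (pder_congr (hcomm l) l).eq_of_nhds
    _ = ∑ l, pder i (pder l (pder l f)) x :=
      Finset.sum_congr rfl fun l _ => pder_pder_comm (hf' l) l i
    _ = pder i (lap f) x := (pder_sum (fun l _ => hf'' l) i).symm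

theorem lap_pder_eventuallyEq (hf : ContDiffAt ℝ 3 f x) (i : Fin d) :
    lap (pder i f) =ᶠ[𝓝 x] pder i (lap f) :=
  (hf.eventually (by simp)).mono fun _ hy => lap_pder hy i

theorem bilap_pder (hf : ContDiffAt ℝ 5 f x) (i : Fin d) :
    bilap (pder i f) x = pder i (bilap f) x :=
  calc
    lap (lap (pder i f)) x = lap (pder i (lap f)) x :=
      (lap_congr (lap_pder_eventuallyEq (hf.of_le (by norm_num)) i)).eq_of_nhds
    _ = pder i (lap (lap f)) x := lap_pder (contDiffAt_lap hf (by norm_num)) i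

theorem pder_eq_zero_of_eventuallyEq_zero (h : f =ᶠ[𝓝 x] 0) (i : Fin d) : pder i f x = 0 := by
  rw [(pder_congr h i).eq_of_nhds]
  simp [pder]

end PartialDerivatives

section TangentialDerivatives

/-- The derivative `∂_n = ∑ n_l D_l` along the vector `n`. -/
def normalDeriv (n : Euc d) (f : Euc d → ℝ) : Euc d → ℝ :=
  fun x => ∑ l, n l * pder l f x

/-- The tangential derivative `n_i D_j - n_j D_i`, which differentiates along a direction
orthogonal to `n`. -/
def tangentialDeriv (n : Euc d) (i j : Fin d) (f : Euc d → ℝ) : Euc d → ℝ :=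
  fun x => n i * pder j f x - n j * pder i f x

variable {f g : Euc d → ℝ} {x : Euc d}

theorem normalDeriv_congr (n : Euc d) (h : f =ᶠ[𝓝 x] g) :
    normalDeriv n f x = normalDeriv n g x :=
  Finset.sum_congr rfl fun l _ => by rw [(pder_congr h l).eq_of_nhds]

theorem tangentialDeriv_mul (n : Euc d) (i j : Fin d) (hf : DifferentiableAt ℝ f x)
    (hg : DifferentiableAt ℝ g x) :
    tangentialDeriv n i j (fun y => f y * g y) x =
      tangentialDeriv n i j f x * g x + f x * tangentialDeriv n i j g x := by
  simp only [tangentialDeriv, pder_mul hf hg]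
  ring

theorem sum_tangentialDeriv_pder (n : Euc d) (j : Fin d) (hf : ContDiffAt ℝ 2 f x) :
    ∑ l, tangentialDeriv n l j (pder l f) x = normalDeriv n (pder j f) x - n j * lap f x := by
  simp only [tangentialDeriv, normalDeriv, lap, pder_pder_comm hf j, Finset.sum_sub_distrib,
    Finset.mul_sum]

theorem sum_mul_tangentialDeriv_add (n : Euc d) (j : Fin d) (f g : Euc d → ℝ) (x : Euc d) :
    ∑ l, (pder l f x * tangentialDeriv n l j g x + tangentialDeriv n j l f x * pder l g x) =
      normalDeriv n f x * pder j g x - pder j f x * normalDeriv n g x := by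
  simp only [tangentialDeriv, normalDeriv, Finset.sum_mul, Finset.mul_sum,
    ← Finset.sum_sub_distrib]
  exact Finset.sum_congr rfl fun l _ => by ring

theorem sum_tangentialDeriv_pder_mul_sub (n : Euc d) (j : Fin d) (hf : ContDiffAt ℝ 2 f x)
    (hharm : lap f x = 0) (hg : DifferentiableAt ℝ g x) :
    ∑ l, (tangentialDeriv n l j (fun y => pder l f y * g y) x -
        pder l f x * tangentialDeriv n l j g x) =
      normalDeriv n (pder j f) x * g x := by
  have hf' (l : Fin d) : DifferentiableAt ℝ (pder l f) x :=
    (contDiffAt_pder (m := 1) hf (by norm_num) l).differentiableAt one_ne_zero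
  simp only [tangentialDeriv_mul n _ j (hf' _) hg, add_sub_cancel_right, ← Finset.sum_mul,
    sum_tangentialDeriv_pder n j hf, hharm, mul_zero, sub_zero]

theorem sum_tangentialDeriv_mul_pder_sub (n : Euc d) (j : Fin d) (hf : ContDiffAt ℝ 2 f x)
    (hharm : lap f x = 0) (hg : DifferentiableAt ℝ g x)
    (hg' : ∀ l, DifferentiableAt ℝ (pder l g) x) :
    ∑ l, (tangentialDeriv n l j (fun y => pder l f y * g y) x +
        (tangentialDeriv n j l (fun y => f y * pder l g y) x -
          f x * tangentialDeriv n j l (pder l g) x)) =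
      normalDeriv n (pder j f) x * g x + normalDeriv n f x * pder j g x -
        pder j f x * normalDeriv n g x := by
  have hfd : DifferentiableAt ℝ f x := hf.differentiableAt two_ne_zero
  rw [add_sub_assoc, ← sum_mul_tangentialDeriv_add n j f g x,
    ← sum_tangentialDeriv_pder_mul_sub n j hf hharm hg, ← Finset.sum_add_distrib]
  refine Finset.sum_congr rfl fun l _ => ?_
  rw [tangentialDeriv_mul n j l hfd (hg' l)]
  ring

end TangentialDerivatives

theorem tangential_identity_second_derivatives_general {Φ u : Euc d → ℝ} {x : Euc d}
    (hΦ : ContDiffAt ℝ 5 Φ x) (hbi : bilap Φ =ᶠ[𝓝 x] 0) (hu : DifferentiableAt ℝ u x)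
    (hu' : ∀ l, DifferentiableAt ℝ (pder l u) x) (n : Euc d) (j k : Fin d) :
    normalDeriv n (lap (pder j (pder k Φ))) x * u x -
        lap (pder j (pder k Φ)) x * normalDeriv n u x =
      ∑ l,
        (tangentialDeriv n l j (fun y => pder l (lap (pder k Φ)) y * u y) x -
          tangentialDeriv n l k (fun y => pder l (lap Φ) y * pder j u y) x +
          pder l (lap Φ) x * tangentialDeriv n l k (pder j u) x +
          tangentialDeriv n j l (fun y => lap (pder k Φ) y * pder l u y) x -
          lap (pder k Φ) x * tangentialDeriv n j l (pder l u) x) := by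
  have hDΦ : ContDiffAt ℝ 4 (pder k Φ) x := contDiffAt_pder hΦ (by norm_num) k
  have hharm : lap (lap (pder k Φ)) x = 0 :=
    (bilap_pder hΦ k).trans (pder_eq_zero_of_eventuallyEq_zero hbi k)
  have hDj : lap (pder j (pder k Φ)) =ᶠ[𝓝 x] pder j (lap (pder k Φ)) :=
    lap_pder_eventuallyEq (hDΦ.of_le (by norm_num)) j
  have hDk : lap (pder k Φ) =ᶠ[𝓝 x] pder k (lap Φ) :=
    lap_pder_eventuallyEq (hΦ.of_le (by norm_num)) k
  have hA := sum_tangentialDeriv_mul_pder_sub n j (contDiffAt_lap hDΦ (by norm_num)) hharm hu hu'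
  have hG := sum_tangentialDeriv_pder_mul_sub n k (contDiffAt_lap hΦ (by norm_num))
    hbi.eq_of_nhds (hu' j)
  rw [← normalDeriv_congr n hDj, ← hDj.eq_of_nhds] at hA
  rw [← normalDeriv_congr n hDk] at hG
  calc
    _ = normalDeriv n (lap (pder j (pder k Φ))) x * u x +
          normalDeriv n (lap (pder k Φ)) x * pder j u x -
          lap (pder j (pder k Φ)) x * normalDeriv n u x -
        normalDeriv n (lap (pder k Φ)) x * pder j u x := by ring
    _ = _ := by
      rw [← hA, ← hG, ← Finset.sum_sub_distrib]
      exact Finset.sum_congr rfl fun l _ => by ring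

/-- the pointwise tangential-derivative identity (5.3) used for second
derivatives of biharmonic functions, valid since `Δ²Φ = 0`. -/
theorem tangential_identity_second_derivatives
    (d : ℕ) (U : Set (Euc d)) (hU : IsOpen U) (Φ u : Euc d → ℝ)
    (hΦ : ContDiffOn ℝ (⊤ : ℕ∞) Φ U) (hu : ContDiffOn ℝ (⊤ : ℕ∞) u U)
    (hbi : ∀ x ∈ U, bilap Φ x = 0) (n : Euc d) (j k : Fin d) :
    ∀ x ∈ U,
      (∑ l, n l * pder l (lap (pder j (pder k Φ))) x) * u x -
        lap (pder j (pder k Φ)) x * (∑ l, n l * pder l u x) =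
      ∑ l,
        ((n l * pder j (fun y => pder l (lap (pder k Φ)) y * u y) x -
            n j * pder l (fun y => pder l (lap (pder k Φ)) y * u y) x) -
          (n l * pder k (fun y => pder l (lap Φ) y * pder j u y) x -
            n k * pder l (fun y => pder l (lap Φ) y * pder j u y) x) +
          pder l (lap Φ) x * (n l * pder k (pder j u) x - n k * pder l (pder j u) x) +
          (n j * pder l (fun y => lap (pder k Φ) y * pder l u y) x -
            n l * pder j (fun y => lap (pder k Φ) y * pder l u y) x) -
          lap (pder k Φ) x * (n j * pder l (pder l u) x - n l * pder j (pder l u) x)) := by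
  intro x hx
  have hxU : U ∈ 𝓝 x := hU.mem_nhds hx
  have hux : ContDiffAt ℝ (⊤ : ℕ∞) u x := hu.contDiffAt hxU
  have hDux (l : Fin d) : ContDiffAt ℝ (⊤ : ℕ∞) (pder l u) x := contDiffAt_pder hux (by simp) l
  exact tangential_identity_second_derivatives_general
    (contDiffAt_infty.1 (hΦ.contDiffAt hxU) 5) (eventually_of_mem hxU hbi)
    (hux.differentiableAt (by simp)) (fun l => (hDux l).differentiableAt (by simp)) n j k

end
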